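/- There exists a smooth, strictly monotone bijection φ : ℝ → ℝ (a diffeomorphism of ℝ) such that φ(x) = x for all x with |x| ≥ 1, and φ vanishes to infinite order at the origin, i.e., φ(0) = 0 and the n-th derivative of φ at 0 equals 0 for every n ≥ 1. -/

import Mathlib

open Real Set Filter Topology in
theorem aux_flat (f : ℝ → ℝ) (hf : ContDiff ℝ (⊤ : ℕ∞) f) (h0 : ∀ x ≤ 0, f x = 0) (n : ℕ) :
    iteratedDeriv n f 0 = 0 := by
  have hc : Continuous (iteratedDeriv n f) :=
    hf.continuous_iteratedDeriv n (by exact_mod_cast le_top)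
  have hz : ∀ x ∈ Iio (0 : ℝ), iteratedDeriv n f x = 0 := by
    intro x hx
    have he : f =ᶠ[𝓝 x] (fun _ => (0 : ℝ)) := by
      filter_upwards [Iio_mem_nhds hx] with y hy
      exact h0 y (le_of_lt hy)
    rw [he.iteratedDeriv_eq n]
    simp
  have hcl : IsClosed {x | iteratedDeriv n f x = 0} := isClosed_eq hc continuous_const
  have hsub : closure (Iio (0 : ℝ)) ⊆ {x | iteratedDeriv n f x = 0} :=
    closure_minimal hz hcl
  rw [closure_Iio] at hsub
  exact hsub (mem_Iic.2 le_rfl)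

/-- There exists a diffeomorphism of ℝ (a smooth, strictly monotone bijection)
equal to the identity outside `[-1, 1]` and vanishing to infinite order at `0`. -/
theorem exists_diffeo_id_outside_vanishing_infinite_order :
    ∃ φ : ℝ → ℝ, ContDiff ℝ (⊤ : ℕ∞) φ ∧ StrictMono φ ∧ Function.Bijective φ ∧
      (∀ x : ℝ, 1 ≤ |x| → φ x = x) ∧
      φ 0 = 0 ∧ ∀ n : ℕ, 1 ≤ n → iteratedDeriv n φ 0 = 0 := by
  obtain ⟨f, hfdef⟩ : ∃ f : ℝ → ℝ, f = fun x => x * Real.smoothTransition x := ⟨_, rfl⟩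
  have hf : ContDiff ℝ (⊤ : ℕ∞) f := by
    rw [hfdef]; exact contDiff_id.mul Real.smoothTransition.contDiff
  have h0 : ∀ x ≤ 0, f x = 0 := by
    intro x hx; simp [hfdef, Real.smoothTransition.zero_of_nonpos hx]
  have h1 : ∀ x, 1 ≤ x → f x = x := by
    intro x hx; simp [hfdef, Real.smoothTransition.one_of_one_le hx]
  have hpos : ∀ x, 0 < x → 0 < f x := by
    intro x hx; rw [hfdef]; exact mul_pos hx (Real.smoothTransition.pos_of_pos hx)
  have hlt : ∀ x y, 0 ≤ x → x < y → f x < f y := by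
    intro x y hx hxy
    rw [hfdef]
    exact mul_lt_mul_of_lt_of_le_of_nonneg_of_pos hxy (Real.smoothTransition.monotone hxy.le) hx
      (Real.smoothTransition.pos_of_pos (hx.trans_lt hxy))
  have hfn : ContDiff ℝ (⊤ : ℕ∞) (fun x => f (-x)) := hf.comp contDiff_neg
  have hφ : ContDiff ℝ (⊤ : ℕ∞) (fun x => f x - f (-x)) := hf.sub hfn
  have hid : ∀ x : ℝ, 1 ≤ |x| → f x - f (-x) = x := by
    intro x hx
    rcases le_abs.1 hx with h | h
    · rw [h1 x h, h0 (-x) (by linarith), sub_zero]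
    · rw [h1 (-x) h, h0 x (by linarith)]; ring
  have hmono : StrictMono (fun x => f x - f (-x)) := by
    intro x y hxy
    simp only
    rcases le_or_gt 0 x with hx | hx
    · rw [h0 (-x) (by linarith), h0 (-y) (by linarith)]
      linarith [hlt x y hx hxy]
    · rw [h0 x hx.le]
      rcases le_or_gt 0 y with hy | hy
      · rw [h0 (-y) (by linarith)]
        have := hpos (-x) (by linarith)
        have : 0 ≤ f y := by
          rcases hy.eq_or_lt with h | h
          · rw [← h, h0 0 le_rfl]
          · exact (hpos y h).le
        linarith
      · rw [h0 y hy.le]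
        linarith [hlt (-y) (-x) (by linarith) (by linarith)]
  refine ⟨fun x => f x - f (-x), hφ, hmono, ⟨hmono.injective, ?_⟩, hid, by simp, ?_⟩
  · apply hφ.continuous.surjective
    · refine Filter.tendsto_id.congr' ?_
      filter_upwards [Filter.eventually_ge_atTop (1 : ℝ)] with x hx
      exact (hid x (le_abs.2 (Or.inl hx))).symm
    · refine Filter.tendsto_id.congr' ?_
      filter_upwards [Filter.eventually_le_atBot (-1 : ℝ)] with x hx
      exact (hid x (le_abs.2 (Or.inr (by linarith)))).symm
  · intro n _
    have hle : ((n : ℕ∞) : WithTop ℕ∞) ≤ ((⊤ : ℕ∞) : WithTop ℕ∞) := by exact_mod_cast le_top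
    have e := iteratedDeriv_fun_sub (n := n) (x := (0 : ℝ)) (hf.of_le hle).contDiffAt
      (hfn.of_le hle).contDiffAt
    rw [e, iteratedDeriv_comp_neg, neg_zero, aux_flat f hf h0 n]
    simp
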